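/- arXiv:2503.16017 — 2 statements merged into one kernel-verified Lean document; each statement's English description precedes it below -/
import Mathlib

section
/- (Fell absorption for discrete groupoids.) Let G be a groupoid and π a *-representation of G on a complex Hilbert space H, and let W_π be the partial isometry on ℓ²(Mor G, H) defined by (W_π f)(β) = π(β)(f β). For each morphism γ of G, let L_γ be the bounded operator on ℓ²(Mor G, H) given by (L_γ f)(α) = f(γ⁻¹α) if r(α) = r(γ) and 0 otherwise (this realizes 1 ⊗ λ_γ), and let M_γ be the bounded operator given by (M_γ f)(α) = π(γ)(f(γ⁻¹α)) if r(α) = r(γ) and 0 otherwise (this realizes π(γ) ⊗ λ_γ). Then W_π ∘ L_γ ∘ W_π* = M_γ for every morphism γ. -/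
open CategoryTheory ContinuousLinearMap

/-- The type of all morphisms of a groupoid. -/
abbrev Mor (G : Type*) [Groupoid G] := Σ X Y : G, X ⟶ Y

/-- A *-representation of a groupoid `G` on a complex Hilbert space `H`. -/
structure GroupoidStarRep (G : Type*) [Groupoid G] (H : Type*) [NormedAddCommGroup H]
    [InnerProductSpace ℂ H] [CompleteSpace H] where
  π : Mor G → H →L[ℂ] H
  map_comp : ∀ (X Y Z : G) (g : X ⟶ Y) (h : Y ⟶ Z),
    π ⟨X, Z, g ≫ h⟩ = (π ⟨Y, Z, h⟩).comp (π ⟨X, Y, g⟩)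
  map_inv : ∀ (X Y : G) (g : X ⟶ Y),
    π ⟨Y, X, Groupoid.inv g⟩ = adjoint (π ⟨X, Y, g⟩)

/-- Fell absorption for discrete groupoids: `W_π (1 ⊗ λ_γ) W_π* = π(γ) ⊗ λ_γ`.
Here `γ` is a morphism `g : X ⟶ Y` (so `d γ = X`, `r γ = Y`), `L` realizes `1 ⊗ λ_γ`,
acting by `(L f) α = f (γ⁻¹ α)` when `r α = r γ` and `0` otherwise, and `M` realizes
`π(γ) ⊗ λ_γ`, acting by `(M f) α = π γ (f (γ⁻¹ α))` when `r α = r γ` and `0` otherwise. -/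
theorem stmt2 {G : Type*} [Groupoid G] {H : Type*} [NormedAddCommGroup H]
    [InnerProductSpace ℂ H] [CompleteSpace H] (ρ : GroupoidStarRep G H)
    (W : lp (fun _ : Mor G => H) 2 →L[ℂ] lp (fun _ : Mor G => H) 2)
    (hW : ∀ (f : lp (fun _ : Mor G => H) 2) (β : Mor G), W f β = ρ.π β (f β))
    (X Y : G) (g : X ⟶ Y)
    (L M : lp (fun _ : Mor G => H) 2 →L[ℂ] lp (fun _ : Mor G => H) 2)
    (hL : ∀ (f : lp (fun _ : Mor G => H) 2) (Z : G) (a : Z ⟶ Y),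
      L f ⟨Z, Y, a⟩ = f ⟨Z, X, a ≫ Groupoid.inv g⟩)
    (hL' : ∀ (f : lp (fun _ : Mor G => H) 2) (Z Q : G) (a : Z ⟶ Q), Q ≠ Y →
      L f ⟨Z, Q, a⟩ = 0)
    (hM : ∀ (f : lp (fun _ : Mor G => H) 2) (Z : G) (a : Z ⟶ Y),
      M f ⟨Z, Y, a⟩ = ρ.π ⟨X, Y, g⟩ (f ⟨Z, X, a ≫ Groupoid.inv g⟩))
    (hM' : ∀ (f : lp (fun _ : Mor G => H) 2) (Z Q : G) (a : Z ⟶ Q), Q ≠ Y →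
      M f ⟨Z, Q, a⟩ = 0) :
    W.comp (L.comp (adjoint W)) = M := by
  classical
  have hWa : ∀ (f : lp (fun _ : Mor G => H) 2) (β : Mor G),
      adjoint W f β = adjoint (ρ.π β) (f β) := by
    intro f β
    have key : ∀ (v : H) (k : lp (fun _ : Mor G => H) 2),
        inner ℂ (lp.single (E := fun _ : Mor G => H) 2 β v) k = inner ℂ v (k β) :=
      fun v k => lp.inner_single_left (𝕜 := ℂ) (G := fun _ : Mor G => H) β v k
    have hs : ∀ v : H, W (lp.single (E := fun _ : Mor G => H) 2 β v)
        = lp.single (E := fun _ : Mor G => H) 2 β (ρ.π β v) := by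
      intro v
      apply lp.ext
      funext b
      refine (hW _ b).trans ?_
      by_cases hb : b = β
      · subst hb
        rw [lp.single_apply_self, lp.single_apply_self]
      · rw [lp.single_apply_ne _ _ _ hb, lp.single_apply_ne _ _ _ hb, map_zero]
    have fin : ∀ v : H, inner ℂ v (adjoint W f β) = inner ℂ v (adjoint (ρ.π β) (f β)) := by
      intro v
      refine (key v _).symm.trans ?_
      refine (adjoint_inner_right W _ _).trans ?_
      rw [hs]
      refine (key _ _).trans ?_
      exact (adjoint_inner_right (ρ.π β) _ _).symm
    exact ext_inner_left (E := H) ℂ fin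
  ext f ⟨Z, Q, a⟩
  simp only [ContinuousLinearMap.comp_apply]
  rw [hW]
  by_cases hQ : Q = Y
  · subst hQ
    rw [hL, hM, hWa, ← ρ.map_inv, ← ContinuousLinearMap.comp_apply, ← ρ.map_comp]
    have h : Groupoid.inv (a ≫ Groupoid.inv g) ≫ a = g := by
      simp [Groupoid.inv_eq_inv]
    rw [h]
  · rw [hL' _ _ _ _ hQ, hM' _ _ _ _ hQ, map_zero]
end

section
/- Let G be a groupoid. For a finitely supported function f : Mor G → ℂ define Λ(f) := Σ_γ f(γ) λ_γ, a bounded operator on ℓ²(Mor G), and Λ₂(f) := Σ_γ f(γ) (λ_γ ⊗ λ_γ), a bounded operator on ℓ²(Mor G × Mor G), where (λ_γ ⊗ λ_γ) e_{(α,β)} = e_{(γα, γβ)} if d(γ) = r(α) and d(γ) = r(β), and 0 otherwise. Let W_λ be the bounded operator on ℓ²(Mor G × Mor G) with W_λ e_{(α,β)} = e_{(βα, β)} if r(α) = d(β) and 0 otherwise, and let 1 ⊗ Λ(f) := Σ_γ f(γ)(1 ⊗ λ_γ), where (1 ⊗ λ_γ) e_{(α,β)} = e_{(α, γβ)} if d(γ)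 = r(β) and 0 otherwise. Then: (a) W_λ ∘ (1 ⊗ Λ(f)) ∘ W_λ* = Λ₂(f) for every finitely supported f; and (b) Λ₂(f) = 0 if and only if Λ(f) = 0. (Hence λ_γ ↦ λ_γ ⊗ λ_γ extends to a well-defined injective *-homomorphism on the image of Λ.) -/
open CategoryTheory ContinuousLinearMap

theorem lp_clm_ext {ι : Type*} [DecidableEq ι] {E : Type*} [NormedAddCommGroup E] [NormedSpace ℂ E]
    (S T : lp (fun _ : ι => ℂ) 2 →L[ℂ] E)
    (h : ∀ i, S (lp.single 2 i 1) = T (lp.single 2 i 1)) : S = T := by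
  have hs : ∀ i (c : ℂ), lp.single (E := fun _ : ι => ℂ) 2 i c
      = c • lp.single (E := fun _ : ι => ℂ) 2 i (1 : ℂ) := by
    intro i c
    rw [← lp.single_smul]; simp
  ext x
  have hx := lp.hasSum_single (E := fun _ : ι => ℂ) (p := 2) (by simp) x
  have h1 := S.hasSum hx
  have h2 := T.hasSum hx
  refine h1.unique ?_
  convert h2 using 2 with i
  rw [hs, map_smul, map_smul, h]

theorem lp_coord {ι : Type*} [DecidableEq ι] (x : lp (fun _ : ι => ℂ) 2) (i : ι) :
    inner ℂ (lp.single 2 i (1 : ℂ)) x = x i := by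
  rw [lp.inner_single_left]; simp

/-- For a finitely supported `f : Mor G → ℂ`, with `Λ f = Σ_γ f γ • λ_γ` on `ℓ²(Mor G)`,
`Λ₂ f = Σ_γ f γ • (λ_γ ⊗ λ_γ)` and `1 ⊗ Λ f = Σ_γ f γ • (1 ⊗ λ_γ)` on
`ℓ²(Mor G × Mor G)`, and `W_λ` the partial isometry with `W_λ e_{(α,β)} = e_{(βα,β)}`
if `r α = d β` and `0` otherwise, we have (a) `W_λ (1 ⊗ Λ f) W_λ* = Λ₂ f` and
(b) `Λ₂ f = 0 ↔ Λ f = 0`. -/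
theorem stmt7 {G : Type*} [Groupoid G] [DecidableEq (Mor G)] [DecidableEq (Mor G × Mor G)]
    (lam : Mor G → (lp (fun _ : Mor G => ℂ) 2 →L[ℂ] lp (fun _ : Mor G => ℂ) 2))
    (hlam : ∀ (X Y : G) (g : X ⟶ Y) (P : G) (b : P ⟶ X),
      lam ⟨X, Y, g⟩ (lp.single 2 (⟨P, X, b⟩ : Mor G) 1) =
        lp.single 2 (⟨P, Y, b ≫ g⟩ : Mor G) 1)
    (hlam' : ∀ (X Y : G) (g : X ⟶ Y) (P Q : G) (b : P ⟶ Q), Q ≠ X →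
      lam ⟨X, Y, g⟩ (lp.single 2 (⟨P, Q, b⟩ : Mor G) 1) = 0)
    (lam2 : Mor G →
      (lp (fun _ : Mor G × Mor G => ℂ) 2 →L[ℂ] lp (fun _ : Mor G × Mor G => ℂ) 2))
    (hlam2 : ∀ (X Y : G) (g : X ⟶ Y) (P Q : G) (a : P ⟶ X) (b : Q ⟶ X),
      lam2 ⟨X, Y, g⟩ (lp.single 2 ((⟨P, X, a⟩ : Mor G), (⟨Q, X, b⟩ : Mor G)) 1) =
        lp.single 2 ((⟨P, Y, a ≫ g⟩ : Mor G), (⟨Q, Y, b ≫ g⟩ : Mor G)) 1)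
    (hlam2' : ∀ (X Y : G) (g : X ⟶ Y) (α β : Mor G), (α.2.1 ≠ X ∨ β.2.1 ≠ X) →
      lam2 ⟨X, Y, g⟩ (lp.single 2 (α, β) 1) = 0)
    (L : Mor G →
      (lp (fun _ : Mor G × Mor G => ℂ) 2 →L[ℂ] lp (fun _ : Mor G × Mor G => ℂ) 2))
    (hL : ∀ (X Y : G) (g : X ⟶ Y) (α : Mor G) (P : G) (b : P ⟶ X),
      L ⟨X, Y, g⟩ (lp.single 2 (α, (⟨P, X, b⟩ : Mor G)) 1) =
        lp.single 2 (α, (⟨P, Y, b ≫ g⟩ : Mor G)) 1)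
    (hL' : ∀ (X Y : G) (g : X ⟶ Y) (α : Mor G) (P Q : G) (b : P ⟶ Q), Q ≠ X →
      L ⟨X, Y, g⟩ (lp.single 2 (α, (⟨P, Q, b⟩ : Mor G)) 1) = 0)
    (W : lp (fun _ : Mor G × Mor G => ℂ) 2 →L[ℂ] lp (fun _ : Mor G × Mor G => ℂ) 2)
    (hW : ∀ (X Y Z : G) (a : X ⟶ Y) (b : Y ⟶ Z),
      W (lp.single 2 ((⟨X, Y, a⟩ : Mor G), (⟨Y, Z, b⟩ : Mor G)) 1) =
        lp.single 2 ((⟨X, Z, a ≫ b⟩ : Mor G), (⟨Y, Z, b⟩ : Mor G)) 1)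
    (hW' : ∀ (X Y P Q : G) (a : X ⟶ Y) (b : P ⟶ Q), Y ≠ P →
      W (lp.single 2 ((⟨X, Y, a⟩ : Mor G), (⟨P, Q, b⟩ : Mor G)) 1) = 0) :
    ∀ f : Mor G →₀ ℂ,
      (W.comp ((f.sum fun γ c => c • L γ).comp (adjoint W)) = f.sum fun γ c => c • lam2 γ) ∧
      ((f.sum fun γ c => c • lam2 γ) = 0 ↔ (f.sum fun γ c => c • lam γ) = 0) := by
  intro f
  have hadj : ∀ (X Y Z : G) (a : X ⟶ Z) (b : Y ⟶ Z),
      adjoint W (lp.single 2 ((⟨X, Z, a⟩ : Mor G), (⟨Y, Z, b⟩ : Mor G)) 1) =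
      lp.single 2 ((⟨X, Y, a ≫ Groupoid.inv b⟩ : Mor G), (⟨Y, Z, b⟩ : Mor G)) 1 := by
    intro X Y Z a b
    ext q
    rw [← lp_coord, adjoint_inner_right]
    obtain ⟨⟨P, Q, c⟩, ⟨R, T, d⟩⟩ := q
    by_cases h : Q = R
    · subst h
      rw [hW, lp_coord, lp.single_apply, lp.single_apply, Pi.single_apply, Pi.single_apply]
      congr 1
      simp only [Prod.mk.injEq, eq_iff_iff]
      constructor
      · rintro ⟨h1, h2⟩
        cases h2
        cases h1
        simp
      · rintro ⟨h1, h2⟩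
        cases h2
        cases h1
        simp
    · rw [hW' _ _ _ _ _ _ h, inner_zero_left, lp.single_apply, Pi.single_apply, if_neg]
      intro h2
      cases h2
      exact h rfl
  have hadj' : ∀ (X Y P Q : G) (a : X ⟶ Y) (b : P ⟶ Q), Y ≠ Q →
      adjoint W (lp.single 2 ((⟨X, Y, a⟩ : Mor G), (⟨P, Q, b⟩ : Mor G)) 1) = 0 := by
    intro X Y X' Y' a b hne
    ext q
    rw [← lp_coord, adjoint_inner_right]
    obtain ⟨⟨P, Q, c⟩, ⟨R, T, d⟩⟩ := q
    by_cases h : Q = R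
    · subst h
      rw [hW, lp_coord, lp.single_apply, Pi.single_apply, if_neg]
      · rfl
      intro h2
      cases h2
      exact hne rfl
    · rw [hW' _ _ _ _ _ _ h, inner_zero_left]
      rfl
  have key : ∀ γ, W.comp ((L γ).comp (adjoint W)) = lam2 γ := by
    rintro ⟨X, Y, g⟩
    apply lp_clm_ext
    rintro ⟨⟨P, Q, c⟩, ⟨R, T, d⟩⟩
    simp only [ContinuousLinearMap.comp_apply]
    by_cases h : Q = T
    · subst h
      rw [hadj]
      by_cases h : Q = X
      · subst h
        rw [hL, hW, hlam2]
        simp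
      · rw [hL' _ _ _ _ _ _ _ h, hlam2' _ _ _ _ _ (Or.inl h), map_zero]
    · rw [hadj' _ _ _ _ _ _ h, map_zero, map_zero, hlam2']
      by_contra! h2
      exact h (h2.1.trans h2.2.symm)
  refine ⟨?_, ?_⟩
  · simp only [← key, Finsupp.sum]
    ext1 v
    simp [sum_apply, map_sum]
  have e1 : (f.sum fun γ c => c • lam γ) = 0 → f = 0 := by
    intro h
    ext ⟨X, Y, g⟩
    have h1 := congrArg (fun T => (T (lp.single 2 (⟨X, X, 𝟙 X⟩ : Mor G) 1) :
      lp (fun _ : Mor G => ℂ) 2)) h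
    have h2 := congrArg (fun v => inner ℂ (lp.single 2 (⟨X, Y, g⟩ : Mor G) (1 : ℂ)) v) h1
    simp only [Finsupp.sum, sum_apply, inner_sum, smul_apply, inner_smul_right, zero_apply,
      inner_zero_right] at h2
    rw [Finset.sum_eq_single (⟨X, Y, g⟩ : Mor G)] at h2
    · rw [hlam, lp_coord, Category.id_comp, lp.single_apply, Pi.single_eq_same] at h2
      simpa using h2
    · rintro ⟨P, Q, k⟩ - hne
      by_cases hX : X = P
      · subst hX
        rw [hlam, lp_coord, Category.id_comp, lp.single_apply, Pi.single_eq_of_ne hne.symm,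
          mul_zero]
      · rw [hlam' _ _ _ _ _ _ hX, inner_zero_right, mul_zero]
    · intro hn
      rw [Finsupp.notMem_support_iff.1 hn, zero_mul]
  have e2 : (f.sum fun γ c => c • lam2 γ) = 0 → f = 0 := by
    intro h
    ext ⟨X, Y, g⟩
    have h1 := congrArg (fun T => (T (lp.single 2 ((⟨X, X, 𝟙 X⟩ : Mor G),
      (⟨X, X, 𝟙 X⟩ : Mor G)) 1) : lp (fun _ : Mor G × Mor G => ℂ) 2)) h
    have h2 := congrArg (fun v => inner ℂ (lp.single 2 ((⟨X, Y, g⟩ : Mor G),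
      (⟨X, Y, g⟩ : Mor G)) (1 : ℂ)) v) h1
    simp only [Finsupp.sum, sum_apply, inner_sum, smul_apply, inner_smul_right, zero_apply,
      inner_zero_right] at h2
    rw [Finset.sum_eq_single (⟨X, Y, g⟩ : Mor G)] at h2
    · rw [hlam2, lp_coord, Category.id_comp, lp.single_apply, Pi.single_eq_same] at h2
      simpa using h2
    · rintro ⟨P, Q, k⟩ - hne
      by_cases hX : X = P
      · subst hX
        rw [hlam2, lp_coord, Category.id_comp, lp.single_apply, Pi.single_eq_of_ne, mul_zero]
        intro h3
        exact hne (congrArg Prod.fst h3).symm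
      · rw [hlam2' _ _ _ _ _ (Or.inl hX), inner_zero_right, mul_zero]
    · intro hn
      rw [Finsupp.notMem_support_iff.1 hn, zero_mul]
  constructor
  · intro h
    rw [e2 h, Finsupp.sum_zero_index]
  · intro h
    rw [e1 h, Finsupp.sum_zero_index]
end
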